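/- Suppose q ≠ 2, or q = 2 and T(T+1) ∤ M. The map H_{M,Γ} × Γ → Λ_M given by (σ, a) ↦ ⟨σ, a⟩ = σα − α (where α^M = a) is A-bilinear with respect to the natural A-module structures; its kernel on the left is {1} and its kernel on the right is Γ ∩ K^M, where K^M = {β^M : β ∈ K}. -/

import Mathlib

open Polynomial IntermediateField

set_option synthInstance.maxHeartbeats 1000000
set_option maxHeartbeats 1000000

/-- `ψ` is the Carlitz module: the ring homomorphism `A = 𝔽_q[T] → End_{𝔽_q}(k̄, +)`
determined by `T ↦ (α ↦ Tα + α^q)` and `c ↦ (α ↦ cα)` for constants `c ∈ 𝔽_q`. -/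
def IsCarlitz {Fq : Type} [Field Fq] [Fintype Fq]
    (ψ : Polynomial Fq →+* AddMonoid.End (AlgebraicClosure (RatFunc Fq))) : Prop :=
  (∀ α, ψ X α = algebraMap (RatFunc Fq) (AlgebraicClosure (RatFunc Fq)) RatFunc.X * α
      + α ^ Fintype.card Fq) ∧
  (∀ (c : Fq) (α), ψ (C c) α
      = algebraMap (RatFunc Fq) (AlgebraicClosure (RatFunc Fq)) (RatFunc.C c) * α)

/-- An automorphism `τ ∈ Gal(E/k)` fixes the `M`-torsion points `Λ_M` pointwise; when
`E ⊇ K = k(Λ_M)` this says exactly `τ ∈ Gal(E/K)`. -/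
def FixesTorsion {Fq : Type} [Field Fq] [Fintype Fq]
    (ψ : Polynomial Fq →+* AddMonoid.End (AlgebraicClosure (RatFunc Fq)))
    (M : Polynomial Fq)
    {E : IntermediateField (RatFunc Fq) (AlgebraicClosure (RatFunc Fq))}
    (τ : ↥E ≃ₐ[RatFunc Fq] ↥E) : Prop :=
  ∀ x : ↥E, ψ M (x : AlgebraicClosure (RatFunc Fq)) = 0 → τ x = x

/-- An automorphism `s ∈ Gal(E/k)` is an extension of `σ_B ∈ Gal(K/k)`, i.e. it acts on
the `M`-torsion points `Λ_M ⊆ E` by `λ ↦ λ^B`. -/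
def ExtendsSigma {Fq : Type} [Field Fq] [Fintype Fq]
    (ψ : Polynomial Fq →+* AddMonoid.End (AlgebraicClosure (RatFunc Fq)))
    (M : Polynomial Fq)
    {E : IntermediateField (RatFunc Fq) (AlgebraicClosure (RatFunc Fq))}
    (s : ↥E ≃ₐ[RatFunc Fq] ↥E) (B : Polynomial Fq) : Prop :=
  ∀ x : ↥E, ψ M (x : AlgebraicClosure (RatFunc Fq)) = 0 →
    ((s x : AlgebraicClosure (RatFunc Fq))) = ψ B (x : AlgebraicClosure (RatFunc Fq))

/-- `c` is the natural `A`-action on `Gal(E/K)`, defined via decompositions: for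
`f ≡ f_1 + ⋯ + f_n (mod M)` with all `gcd(f_i, M) = 1` and extensions `s_i` of
`σ_{f_i}`, one has `c f τ = Σ_i s_i ∘ τ ∘ s_i⁻¹`. -/
def IsDecompConjAction {Fq : Type} [Field Fq] [Fintype Fq]
    (ψ : Polynomial Fq →+* AddMonoid.End (AlgebraicClosure (RatFunc Fq)))
    (M : Polynomial Fq)
    {E : IntermediateField (RatFunc Fq) (AlgebraicClosure (RatFunc Fq))}
    (c : Polynomial Fq → (↥E ≃ₐ[RatFunc Fq] ↥E) → (↥E ≃ₐ[RatFunc Fq] ↥E)) : Prop :=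
  ∀ (f : Polynomial Fq) (τ : ↥E ≃ₐ[RatFunc Fq] ↥E), FixesTorsion ψ M τ →
    ∀ (n : ℕ) (g : Fin n → Polynomial Fq), (∀ i, IsCoprime (g i) M) →
      M ∣ (f - ∑ i, g i) →
      ∀ s : Fin n → (↥E ≃ₐ[RatFunc Fq] ↥E), (∀ i, ExtendsSigma ψ M (s i) (g i)) →
        c f τ = (List.ofFn (fun i => s i * τ * (s i)⁻¹)).prod

/-! For a root `α` of `a`, the difference `σ α - α` is a torsion point that does not depend on `α`,
because `σ` fixes the torsion. Additivity in both variables and `A`-linearity in `a` follow, the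
Galois action being compatible with the Carlitz action. If `s` extends `σ_B`, then
`⟨s σ s⁻¹, a⟩ = s ⟨σ, a⟩ = ⟨σ, a⟩ ^ B`, so linearity in `σ` needs two more facts.

* For `B` coprime to `M`, the automorphism `σ_B` exists. It suffices to treat a monic prime
  `B = P ∤ M`. Modulo `P` the Carlitz action of `P` is `x ↦ x ^ (q ^ deg P)`, since `P` splits as
  `∏ (Y - T ^ (q ^ i))` over `A / P`. An arithmetic Frobenius at `P` thus agrees with `P` modulo a
  prime above `P`, and the `M`-torsion injects into the residue ring of that prime.
* Every polynomial is a sum of polynomials coprime to `M`. These sums form a ring that contains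
  the constants. If `T - a ∤ M` for some `a`, it contains `T = (T - a) + a`. If there is `a ≠ 0, 1`,
  write `M = T ^ m N` with `T ∤ N`; then `N + T` and `N + a T` are both coprime to `M`.

The kernels are read off from the Galois correspondence for `k(Λ_M, (1/M)Γ) / k`.
-/

section CarlitzModule

variable (Fq R : Type*) [Field Fq] [Fintype Fq] [CommRing R] [Algebra Fq R] [Algebra Fq[X] R]

/-- The Carlitz module on an arbitrary `Fq[T]`-algebra `R`: the variable `T` acts by
`r ↦ T r + r ^ q`. -/
noncomputable def carlitz : Fq[X] →ₐ[Fq] Module.End Fq R :=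
  aeval (LinearMap.mulLeft Fq (algebraMap Fq[X] R X) +
    (FiniteField.frobeniusAlgHom Fq R).toLinearMap)

variable {Fq R}

theorem carlitz_X_apply (r : R) :
    carlitz Fq R X r = algebraMap Fq[X] R X * r + r ^ Fintype.card Fq := by
  simp [carlitz]

theorem carlitz_C_apply (a : Fq) (r : R) : carlitz Fq R (C a) r = a • r := by
  simp [carlitz]

theorem carlitz_add_apply (f g : Fq[X]) (r : R) :
    carlitz Fq R (f + g) r = carlitz Fq R f r + carlitz Fq R g r := by
  rw [map_add, LinearMap.add_apply]

theorem carlitz_mul_apply (f g : Fq[X]) (r : R) :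
    carlitz Fq R (f * g) r = carlitz Fq R f (carlitz Fq R g r) := by
  rw [map_mul, Module.End.mul_apply]

theorem carlitz_mul_X_apply (f : Fq[X]) (r : R) :
    carlitz Fq R (f * X) r =
      algebraMap Fq[X] R X * carlitz Fq R f r + carlitz Fq R f r ^ Fintype.card Fq := by
  rw [mul_comm, carlitz_mul_apply, carlitz_X_apply]

variable [IsScalarTower Fq Fq[X] R]

theorem map_carlitz {S : Type*} [CommRing S] [Algebra Fq S] [Algebra Fq[X] S]
    [IsScalarTower Fq Fq[X] S] (φ : R →ₐ[Fq[X]] S) (f : Fq[X]) (r : R) :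
    φ (carlitz Fq R f r) = carlitz Fq S f (φ r) := by
  induction f using Polynomial.recOnHorner with
  | M0 => simp
  | MC f a _ _ ih =>
    rw [carlitz_add_apply, carlitz_add_apply, map_add, ih, carlitz_C_apply, carlitz_C_apply,
      φ.map_smul_of_tower]
  | MX f _ ih =>
    rw [carlitz_mul_X_apply, carlitz_mul_X_apply, map_add, map_mul, map_pow, φ.commutes, ih]

theorem sq_dvd_carlitz_sub (f : Fq[X]) (r : R) :
    r ^ 2 ∣ carlitz Fq R f r - algebraMap Fq[X] R f * r := by
  induction f using Polynomial.recOnHorner with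
  | M0 => simp
  | MC f a _ _ ih =>
    rwa [carlitz_add_apply, carlitz_C_apply, map_add, C_eq_algebraMap,
      ← IsScalarTower.algebraMap_apply, Algebra.smul_def a, add_mul, add_sub_add_right_eq_sub]
  | MX f _ ih =>
    have hr : r ∣ carlitz Fq R f r :=
      (dvd_sub_left (dvd_mul_left r _)).mp ((dvd_pow_self r two_ne_zero).trans ih)
    have hrq : r ^ 2 ∣ carlitz Fq R f r ^ Fintype.card Fq :=
      (pow_dvd_pow_of_dvd hr 2).trans (pow_dvd_pow _ Fintype.one_lt_card)
    have hstep : carlitz Fq R (f * X) r - algebraMap Fq[X] R (f * X) * r =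
        algebraMap Fq[X] R X * (carlitz Fq R f r - algebraMap Fq[X] R f * r) +
          carlitz Fq R f r ^ Fintype.card Fq := by
      rw [carlitz_mul_X_apply, map_mul (algebraMap Fq[X] R)]
      ring
    rw [hstep]
    exact dvd_add (ih.mul_left _) hrq

theorem eq_zero_of_carlitz_eq_zero_of_mem [IsDomain R] (Q : Ideal R) {M : Fq[X]}
    (hM : algebraMap Fq[X] R M ∉ Q) {r : R} (hr : r ∈ Q) (hMr : carlitz Fq R M r = 0) : r = 0 := by
  obtain ⟨s, hs⟩ := sq_dvd_carlitz_sub M r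
  have hfac : r * (algebraMap Fq[X] R M + r * s) = 0 := by
    rw [hMr] at hs
    linear_combination -hs
  refine (mul_eq_zero.mp hfac).resolve_right fun h => hM ?_
  rw [eq_neg_of_add_eq_zero_left h]
  exact Q.neg_mem (Q.mul_mem_right _ hr)

end CarlitzModule

section ModPrime

theorem map_eq_zero_iff_dvd_of_irreducible {A R : Type*} [CommRing A]
    [IsPrincipalIdealRing A] [CommRing R] [Nontrivial R] (φ : A →+* R) {p : A} (hp : Irreducible p)
    (hφ : φ p = 0) (a : A) : φ a = 0 ↔ p ∣ a := by
  refine ⟨fun ha => by_contra fun hpa => ?_, fun ⟨b, hb⟩ => by rw [hb, map_mul, hφ, zero_mul]⟩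
  have hcop := (hp.coprime_iff_not_dvd.mpr hpa).map φ
  rw [hφ, ha, isCoprime_zero_left] at hcop
  exact not_isUnit_zero hcop

theorem frobeniusAlgHom_pow_apply {Fq R : Type*} [Field Fq] [Fintype Fq] [CommRing R]
    [Algebra Fq R] (n : ℕ) (r : R) :
    (FiniteField.frobeniusAlgHom Fq R ^ n) r = r ^ Fintype.card Fq ^ n := by
  rw [AlgHom.coe_pow, FiniteField.coe_frobeniusAlgHom, pow_iterate]

variable {Fq R : Type*} [Field Fq] [Fintype Fq] [CommRing R] [Algebra Fq R] [Algebra Fq[X] R]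

variable (Fq R) in
/-- The action of `R[Y]` on functions `R → R` in which `Y` acts by precomposition with the
Carlitz action of `T`. The coefficients act by multiplication of values, so it extends
`f ↦ carlitz Fq R f` from `Fq[T]` to polynomials with coefficients in `R`. -/
noncomputable def carlitzPrecomp : R[X] →ₐ[R] Module.End R (R → R) :=
  aeval (LinearMap.funLeft R R (carlitz Fq R X))

theorem carlitzPrecomp_map_id (f : Fq[X]) :
    carlitzPrecomp Fq R (f.map (algebraMap Fq R)) id = carlitz Fq R f := by
  induction f using Polynomial.recOnHorner with
  | M0 => ext r; simp
  | MC f a _ _ ih =>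
    ext r
    rw [Polynomial.map_add, map_add, LinearMap.add_apply, Pi.add_apply, ih, carlitz_add_apply,
      carlitz_C_apply]
    simp [carlitzPrecomp, Algebra.smul_def]
  | MX f _ ih =>
    ext r
    rw [Polynomial.map_mul, mul_comm, map_mul, Module.End.mul_apply, ih, map_X, carlitzPrecomp,
      aeval_X, LinearMap.funLeft_apply, carlitz_mul_apply]

theorem carlitzPrecomp_prod_id (n : ℕ) :
    carlitzPrecomp Fq R
      (∏ i ∈ Finset.range n, (X - C (algebraMap Fq[X] R X ^ Fintype.card Fq ^ i))) id =
      fun r => r ^ Fintype.card Fq ^ n := by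
  induction n with
  | zero => ext r; simp
  | succ n ih =>
    ext r
    rw [Finset.prod_range_succ, mul_comm, map_mul, Module.End.mul_apply, ih, carlitzPrecomp,
      map_sub, aeval_X, aeval_C, LinearMap.sub_apply, Pi.sub_apply, LinearMap.funLeft_apply,
      Module.algebraMap_end_apply, Pi.smul_apply, smul_eq_mul, carlitz_X_apply]
    simp only [← frobeniusAlgHom_pow_apply (Fq := Fq), map_add, map_mul]
    rw [add_sub_cancel_left, frobeniusAlgHom_pow_apply, frobeniusAlgHom_pow_apply, ← pow_mul,
      ← pow_succ']

theorem injOn_algebraMap_X_pow_card_pow [IsDomain R] {P : Fq[X]}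
    (hPi : Irreducible P) (hP : algebraMap Fq[X] R P = 0) :
    Set.InjOn (fun i => algebraMap Fq[X] R X ^ Fintype.card Fq ^ i)
      (Finset.range P.natDegree) := by
  intro i hi j hj hij
  wlog hlt : i < j generalizing i j
  · exact (not_lt.mp hlt).eq_or_lt.elim Eq.symm fun h => (this hj hi hij.symm h).symm
  obtain ⟨n, rfl⟩ := Nat.exists_eq_add_of_lt hlt
  have hfix : algebraMap Fq[X] R (X ^ Fintype.card Fq ^ (n + 1) - X) = 0 := by
    refine eq_zero_of_pow_eq_zero (n := Fintype.card Fq ^ i) ?_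
    rw [← frobeniusAlgHom_pow_apply (Fq := Fq), map_sub, map_sub, map_pow,
      frobeniusAlgHom_pow_apply, frobeniusAlgHom_pow_apply, ← pow_mul, ← pow_add, sub_eq_zero]
    rw [show n + 1 + i = i + n + 1 by ring]
    exact hij.symm
  rw [map_eq_zero_iff_dvd_of_irreducible _ hPi hP, ← Nat.card_eq_fintype_card] at hfix
  have hdvd := Nat.le_of_dvd n.succ_pos (hPi.natDegree_dvd_of_dvd_X_pow_card_pow_sub_X hfix)
  have := Finset.mem_range.mp hj
  omega

variable [IsScalarTower Fq Fq[X] R] {P : Fq[X]}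

theorem eval_map_algebraMap_X_pow_card_pow (hP : algebraMap Fq[X] R P = 0) (i : ℕ) :
    (P.map (algebraMap Fq R)).eval (algebraMap Fq[X] R X ^ Fintype.card Fq ^ i) = 0 := by
  rw [eval_map_algebraMap, ← frobeniusAlgHom_pow_apply (Fq := Fq), aeval_algHom_apply,
    aeval_algebraMap_apply, aeval_X_left_apply, hP, map_zero]

variable [IsDomain R]

theorem map_eq_prod_X_sub_C_of_algebraMap_eq_zero (hPm : P.Monic) (hPi : Irreducible P)
    (hP : algebraMap Fq[X] R P = 0) :
    P.map (algebraMap Fq R) = ∏ i ∈ Finset.range P.natDegree,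
      (X - C (algebraMap Fq[X] R X ^ Fintype.card Fq ^ i)) := by
  have hmonic : (P.map (algebraMap Fq R)).Monic := hPm.map _
  have hprod := monic_prod_X_sub_C (fun i => algebraMap Fq[X] R X ^ Fintype.card Fq ^ i)
    (Finset.range P.natDegree)
  have hdeg : (P.map (algebraMap Fq R)).degree = P.natDegree := by
    rw [hPm.degree_map, degree_eq_natDegree hPm.ne_zero]
  refine eq_of_degree_sub_lt_of_eval_index_eq _ (injOn_algebraMap_X_pow_card_pow hPi hP) ?_
    fun i hi => ?_
  · rw [Finset.card_range, ← hdeg]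
    refine degree_sub_lt_left ?_ hmonic.ne_zero (by rw [hmonic, hprod])
    rw [hdeg, degree_prod]
    simp only [degree_X_sub_C, Finset.sum_const, Finset.card_range, nsmul_one]
  · rw [eval_map_algebraMap_X_pow_card_pow hP, eval_prod,
      Finset.prod_eq_zero hi (by rw [eval_sub, eval_X, eval_C, sub_self])]

theorem carlitz_eq_pow_of_algebraMap_eq_zero (hPm : P.Monic) (hPi : Irreducible P)
    (hP : algebraMap Fq[X] R P = 0) (r : R) :
    carlitz Fq R P r = r ^ Fintype.card Fq ^ P.natDegree := by
  rw [← carlitzPrecomp_map_id, map_eq_prod_X_sub_C_of_algebraMap_eq_zero hPm hPi hP,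
    carlitzPrecomp_prod_id]

end ModPrime

section FrobeniusElement

variable {Fq : Type*} [Field Fq] [Fintype Fq] {P : Fq[X]}

theorem natCard_quotient_span_singleton (hPm : P.Monic) :
    Nat.card (Fq[X] ⧸ Ideal.span {P}) = Fintype.card Fq ^ P.natDegree := by
  have : Module.Finite Fq (AdjoinRoot P) := hPm.finite_adjoinRoot
  calc Nat.card (AdjoinRoot P) = Nat.card Fq ^ Module.finrank Fq (AdjoinRoot P) :=
        Module.natCard_eq_pow_finrank
    _ = Fintype.card Fq ^ P.natDegree := by
        rw [(AdjoinRoot.powerBasis' hPm).finrank, AdjoinRoot.powerBasis'_dim,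
          Nat.card_eq_fintype_card]

variable {S G : Type*} [CommRing S] [IsDomain S] [Algebra Fq S] [Algebra Fq[X] S]
  [IsScalarTower Fq Fq[X] S] [Group G] [MulSemiringAction G S] [SMulCommClass G Fq[X] S]

theorem smul_eq_carlitz_of_isArithFrobAt (hPm : P.Monic) (hPi : Irreducible P)
    {Q : Ideal S} [Q.IsPrime] (hQ : Q.under Fq[X] = Ideal.span {P}) {σ : G}
    (hσ : IsArithFrobAt Fq[X] σ Q) {M : Fq[X]} (hPM : ¬P ∣ M) {x : S}
    (hx : carlitz Fq S M x = 0) : σ • x = carlitz Fq S P x := by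
  have hmem (f : Fq[X]) : algebraMap Fq[X] S f ∈ Q ↔ P ∣ f := by
    rw [← Ideal.mem_span_singleton, ← hQ, Ideal.under_def, Ideal.mem_comap]
  let π : S →ₐ[Fq[X]] S ⧸ Q := Ideal.Quotient.mkₐ Fq[X] Q
  have hP : algebraMap Fq[X] (S ⧸ Q) P = 0 :=
    Ideal.Quotient.eq_zero_iff_mem.mpr ((hmem P).mpr dvd_rfl)
  have hcongr : π (σ • x) = π (carlitz Fq S P x) := by
    have hfrob : π (σ • x) = π x ^ Nat.card (Fq[X] ⧸ Q.under Fq[X]) := hσ.mk_apply x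
    rw [hfrob, hQ, natCard_quotient_span_singleton hPm, map_carlitz,
      carlitz_eq_pow_of_algebraMap_eq_zero hPm hPi hP]
  have htorsion : carlitz Fq S M (σ • x - carlitz Fq S P x) = 0 := by
    have hσx := map_carlitz (MulSemiringAction.toAlgHom Fq[X] S σ) M x
    rw [hx, map_zero, MulSemiringAction.toAlgHom_apply] at hσx
    rw [map_sub, ← hσx, ← carlitz_mul_apply, mul_comm, carlitz_mul_apply, hx, map_zero, sub_zero]
  exact sub_eq_zero.mp <| eq_zero_of_carlitz_eq_zero_of_mem Q (mt (hmem M).mp hPM)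
    (Ideal.Quotient.eq.mp hcongr) htorsion

theorem exists_smul_eq_carlitz [Module.Finite Fq[X] S] [FaithfulSMul Fq[X] S] [Finite G]
    [Algebra.IsInvariant Fq[X] S G] (hPm : P.Monic) (hPi : Irreducible P) :
    ∃ σ : G, ∀ M : Fq[X], ¬P ∣ M → ∀ x : S, carlitz Fq S M x = 0 → σ • x = carlitz Fq S P x := by
  have : (Ideal.span {P}).IsMaximal := PrincipalIdealRing.isMaximal_of_irreducible hPi
  have : Finite (Fq[X] ⧸ Ideal.span {P}) :=
    Nat.finite_of_card_ne_zero (by rw [natCard_quotient_span_singleton hPm]; positivity)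
  obtain ⟨⟨Q, _, hQP⟩⟩ : Nonempty ((Ideal.span {P}).primesOver S) := inferInstance
  have : Finite (S ⧸ Q) := Module.finite_of_finite (Fq[X] ⧸ Ideal.span {P})
  obtain ⟨σ, hσ⟩ := IsArithFrobAt.exists_of_isInvariant Fq[X] G Q
  exact ⟨σ, fun M hPM x hx => smul_eq_carlitz_of_isArithFrobAt hPm hPi hQP.over.symm hσ hPM hx⟩

end FrobeniusElement

section CarlitzPolynomial

variable {Fq : Type*} [Field Fq] [Fintype Fq]

/-- The polynomial over `Fq[T]` that represents the Carlitz action of `f` on every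
`Fq[T]`-algebra, see `aeval_carlitzPolynomial`. -/
noncomputable def carlitzPolynomial (f : Fq[X]) : Fq[X][X] := carlitz Fq Fq[X][X] f X

theorem aeval_carlitzPolynomial {L : Type*} [CommRing L] [Algebra Fq L] [Algebra Fq[X] L]
    [IsScalarTower Fq Fq[X] L] (f : Fq[X]) (x : L) :
    aeval x (carlitzPolynomial f) = carlitz Fq L f x := by
  rw [carlitzPolynomial, map_carlitz, aeval_X]

theorem carlitzPolynomial_add_C (f : Fq[X]) (a : Fq) :
    carlitzPolynomial (f + C a) = carlitzPolynomial f + C (C a) * X := by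
  rw [carlitzPolynomial, carlitzPolynomial, carlitz_add_apply, carlitz_C_apply, Algebra.smul_def]
  rfl

theorem carlitzPolynomial_mul_X (f : Fq[X]) :
    carlitzPolynomial (f * X) =
      C X * carlitzPolynomial f + carlitzPolynomial f ^ Fintype.card Fq := by
  rw [carlitzPolynomial, carlitzPolynomial, carlitz_mul_X_apply]
  rfl

theorem derivative_carlitzPolynomial (f : Fq[X]) : derivative (carlitzPolynomial f) = C f := by
  have hq : ((Fintype.card Fq : ℕ) : Fq[X][X]) = 0 := by
    rw [← map_natCast (algebraMap Fq Fq[X][X]), FiniteField.cast_card_eq_zero, map_zero]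
  induction f using Polynomial.recOnHorner with
  | M0 => simp [carlitzPolynomial]
  | MC f a _ _ ih => simp [carlitzPolynomial_add_C, ih]
  | MX f _ ih => simp [carlitzPolynomial_mul_X, derivative_pow, ih, hq, mul_comm]

theorem isMonicOfDegree_carlitzPolynomial {f : Fq[X]} {n : ℕ} (hf : IsMonicOfDegree f n) :
    IsMonicOfDegree (carlitzPolynomial f) (Fintype.card Fq ^ n) := by
  induction n generalizing f with
  | zero =>
    rw [isMonicOfDegree_zero_iff.mp hf, carlitzPolynomial, map_one, Module.End.one_apply, pow_zero]
    exact isMonicOfDegree_X _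
  | succ n ih =>
    have hdivX : IsMonicOfDegree f.divX n := by
      rw [isMonicOfDegree_iff] at hf ⊢
      exact ⟨by rw [natDegree_divX_eq_natDegree_tsub_one]; omega, by rw [coeff_divX, hf.2]⟩
    have hdeg := (ih hdivX).natDegree_eq
    have hlt : Fintype.card Fq ^ n < Fintype.card Fq ^ (n + 1) :=
      Nat.pow_lt_pow_right Fintype.one_lt_card n.lt_succ_self
    rw [← divX_mul_X_add f, carlitzPolynomial_add_C, carlitzPolynomial_mul_X, add_comm (C X * _),
      add_assoc]
    refine ((ih hdivX).pow (Fintype.card Fq)).add_right ?_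
    have hlinear : (C (C (f.coeff 0)) * X : Fq[X][X]).natDegree ≤ 1 := by
      simpa using natDegree_C_mul_X_pow_le (C (f.coeff 0)) 1
    have hpos : 1 ≤ Fintype.card Fq ^ n := Nat.one_le_pow _ _ Fintype.card_pos
    have hC := natDegree_C_mul_le X (carlitzPolynomial f.divX)
    rw [← pow_succ]
    exact (natDegree_add_le _ _).trans_lt (by omega)

theorem carlitzPolynomial_ne_zero {f : Fq[X]} (hf : f ≠ 0) : carlitzPolynomial f ≠ 0 := by
  intro h
  have hder := derivative_carlitzPolynomial f
  rw [h, derivative_zero, eq_comm, C_eq_zero] at hder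
  exact hf hder

theorem isIntegral_of_carlitz_eq_zero {L : Type*} [CommRing L] [Algebra Fq L] [Algebra Fq[X] L]
    [IsScalarTower Fq Fq[X] L] {M : Fq[X]} (hM : M ≠ 0) {x : L} (hx : carlitz Fq L M x = 0) :
    IsIntegral Fq[X] x := by
  have hmonic : IsMonicOfDegree (C M.leadingCoeff⁻¹ * M) (C M.leadingCoeff⁻¹ * M).natDegree :=
    ⟨rfl, by rw [mul_comm]; exact monic_mul_leadingCoeff_inv hM⟩
  refine ⟨carlitzPolynomial (C M.leadingCoeff⁻¹ * M),
    (isMonicOfDegree_carlitzPolynomial hmonic).monic, ?_⟩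
  rw [← aeval_def, aeval_carlitzPolynomial, carlitz_mul_apply, hx, map_zero]

theorem finite_setOf_carlitz_eq_zero {L : Type*} [CommRing L] [IsDomain L] [Algebra Fq L]
    [Algebra Fq[X] L] [IsScalarTower Fq Fq[X] L] [FaithfulSMul Fq[X] L] {M : Fq[X]} (hM : M ≠ 0) :
    {x | carlitz Fq L M x = 0}.Finite := by
  have : Module.IsTorsionFree Fq[X] L := FaithfulSMul.to_isTorsionFree _ _
  refine (rootSet_finite (carlitzPolynomial M) L).subset fun x hx => ?_
  rw [mem_rootSet, aeval_carlitzPolynomial]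
  exact ⟨carlitzPolynomial_ne_zero hM, hx⟩

variable {k : Type*} [Field k] [Algebra Fq[X] k]

theorem derivative_map_carlitzPolynomial_sub_C (M : Fq[X]) (a : k) :
    derivative ((carlitzPolynomial M).map (algebraMap Fq[X] k) - C a) =
      C (algebraMap Fq[X] k M) := by
  rw [derivative_sub, derivative_map, derivative_carlitzPolynomial, derivative_C, sub_zero, map_C]

variable [FaithfulSMul Fq[X] k] {M : Fq[X]}

theorem separable_map_carlitzPolynomial_sub_C (hM : M ≠ 0) (a : k) :
    ((carlitzPolynomial M).map (algebraMap Fq[X] k) - C a).Separable := by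
  have hMk : algebraMap Fq[X] k M ≠ 0 := by
    rwa [Ne, FaithfulSMul.algebraMap_eq_zero_iff]
  refine ⟨0, C (algebraMap Fq[X] k M)⁻¹, ?_⟩
  rw [derivative_map_carlitzPolynomial_sub_C, zero_mul, zero_add, ← C_mul,
    inv_mul_cancel₀ hMk, C_1]

theorem isSeparable_of_carlitz_eq_algebraMap {L : Type*} [Field L] [Algebra k L] [Algebra Fq L]
    [Algebra Fq[X] L] [IsScalarTower Fq Fq[X] L] [IsScalarTower Fq[X] k L] (hM : M ≠ 0) {x : L}
    {a : k} (hx : carlitz Fq L M x = algebraMap k L a) : IsSeparable k x := by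
  refine (separable_map_carlitzPolynomial_sub_C hM a).of_dvd (minpoly.dvd _ _ ?_)
  rw [map_sub, aeval_map_algebraMap, aeval_carlitzPolynomial, hx, aeval_C, sub_self]

theorem carlitz_surjective_of_isAlgClosed [IsAlgClosed k] [Algebra Fq k] [IsScalarTower Fq Fq[X] k]
    (hM : M ≠ 0) : Function.Surjective (carlitz Fq k M) := by
  intro a
  have hdeg : ((carlitzPolynomial M).map (algebraMap Fq[X] k) - C a).degree ≠ 0 := by
    intro h
    have hder := derivative_map_carlitzPolynomial_sub_C M a
    rw [eq_C_of_degree_eq_zero h, derivative_C, eq_comm, C_eq_zero,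
      FaithfulSMul.algebraMap_eq_zero_iff] at hder
    exact hM hder
  obtain ⟨x, hx⟩ := IsAlgClosed.exists_root _ hdeg
  refine ⟨x, ?_⟩
  rwa [IsRoot, eval_sub, eval_C, eval_map_algebraMap, aeval_carlitzPolynomial, sub_eq_zero] at hx

end CarlitzPolynomial

section GaloisAction

theorem normal_adjoin_of_forall_mem {k L : Type*} [Field k] [Field L] [Algebra k L] [Normal k L]
    {T : Set L} (hT : ∀ (σ : L ≃ₐ[k] L), ∀ x ∈ T, σ x ∈ T) : Normal k (adjoin k T) := by
  rw [IntermediateField.normal_iff_forall_map_le']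
  intro σ
  rw [adjoin_map]
  exact adjoin.mono _ _ _ (Set.image_subset_iff.mpr (hT σ))

variable {Fq k L : Type*} [Field Fq] [Fintype Fq] [Field k] [Algebra Fq[X] k] [Field L]
  [Algebra k L] [Algebra Fq L] [Algebra Fq[X] L] [IsScalarTower Fq Fq[X] L]
  [IsScalarTower Fq[X] k L]

theorem algEquiv_carlitz (σ : L ≃ₐ[k] L) (f : Fq[X]) (x : L) :
    σ (carlitz Fq L f x) = carlitz Fq L f (σ x) :=
  map_carlitz (σ.toAlgHom.restrictScalars Fq[X]) f x

theorem isGalois_adjoin_setOf_carlitz_mem [FaithfulSMul Fq[X] k] [Normal k L] {M : Fq[X]}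
    (hM : M ≠ 0) {Γ : Set L} (hΓ : Γ ⊆ Set.range (algebraMap k L)) :
    IsGalois k (adjoin k {x : L | carlitz Fq L M x ∈ Γ}) where
  to_normal := normal_adjoin_of_forall_mem fun σ x hx => by
    obtain ⟨a, ha⟩ := hΓ hx
    rw [Set.mem_ofPred_eq] at hx ⊢
    rwa [← algEquiv_carlitz, ← ha, σ.commutes, ha]
  to_isSeparable := (isSeparable_adjoin_iff_isSeparable _ _).mpr fun x hx => by
    obtain ⟨a, ha⟩ := hΓ hx
    exact isSeparable_of_carlitz_eq_algebraMap hM ha.symm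

theorem finiteDimensional_adjoin_setOf_carlitz_eq_zero [FaithfulSMul Fq[X] k] [Normal k L]
    {M : Fq[X]} (hM : M ≠ 0) : FiniteDimensional k (adjoin k {x : L | carlitz Fq L M x = 0}) := by
  have : FaithfulSMul Fq[X] L := .trans Fq[X] k L
  have := (finite_setOf_carlitz_eq_zero (L := L) hM).to_subtype
  exact finiteDimensional_adjoin fun x _ => Algebra.IsIntegral.isIntegral x

theorem exists_algEquiv_eq_carlitz_of_finiteDimensional [IsFractionRing Fq[X] k]
    [FiniteDimensional k L] [IsGalois k L] {P : Fq[X]}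
    (hPm : P.Monic) (hPi : Irreducible P) :
    ∃ σ : L ≃ₐ[k] L, ∀ M : Fq[X], ¬P ∣ M → ∀ x : L, carlitz Fq L M x = 0 →
      σ x = carlitz Fq L P x := by
  let S := integralClosure Fq[X] L
  let : MulSemiringAction (L ≃ₐ[k] L) S := IsIntegralClosure.MulSemiringAction Fq[X] k L S
  have : Module.Finite Fq[X] S := IsIntegralClosure.finite Fq[X] k L S
  have : IsFractionRing S L := integralClosure.isFractionRing_of_finite_extension k L
  have : SMulCommClass (L ≃ₐ[k] L) Fq[X] S :=
    ⟨fun σ f x => map_smul (galRestrict Fq[X] k L S σ) f x⟩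
  have : Algebra.IsInvariant Fq[X] S (L ≃ₐ[k] L) := Algebra.isInvariant_of_isGalois Fq[X] k L S
  have : FaithfulSMul Fq[X] L := .trans Fq[X] k L
  have : FaithfulSMul Fq[X] S := inferInstance
  obtain ⟨σ, hσ⟩ := exists_smul_eq_carlitz (S := S) (G := L ≃ₐ[k] L) hPm hPi
  refine ⟨σ, fun M hPM x hx => ?_⟩
  let ι : S →ₐ[Fq[X]] L := S.val
  let y : S := ⟨x, isIntegral_of_carlitz_eq_zero (by rintro rfl; exact hPM (dvd_zero P)) hx⟩
  have hy : carlitz Fq S M y = 0 := Subtype.ext ((map_carlitz ι M y).trans hx)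
  calc σ x = ι (σ • y) := (algebraMap_galRestrict_apply Fq[X] σ y).symm
    _ = carlitz Fq L P x := by rw [hσ M hPM y hy, map_carlitz]; rfl

variable (k L) in
/-- The polynomials `B` for which `σ_B : λ ↦ λ ^ B` on the `M`-torsion points is induced by an
automorphism of `L / k`. -/
def galoisMultipliers (M : Fq[X]) : Submonoid Fq[X] where
  carrier := {B | ∃ σ : L ≃ₐ[k] L, ∀ x : L, carlitz Fq L M x = 0 → σ x = carlitz Fq L B x}
  one_mem' := ⟨1, fun x _ => by rw [map_one]; rfl⟩
  mul_mem' := by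
    rintro B B' ⟨σ, hσ⟩ ⟨σ', hσ'⟩
    refine ⟨σ' * σ, fun x hx => ?_⟩
    rw [AlgEquiv.mul_apply, hσ x hx, algEquiv_carlitz, hσ' x hx, carlitz_mul_apply]

theorem add_mul_mem_galoisMultipliers_iff {M B : Fq[X]} (C : Fq[X]) :
    B + C * M ∈ galoisMultipliers k L M ↔ B ∈ galoisMultipliers k L M := by
  refine exists_congr fun σ => forall₂_congr fun x hx => ?_
  rw [carlitz_add_apply, carlitz_mul_apply, hx, map_zero, add_zero]

variable [IsFractionRing Fq[X] k] [Normal k L]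

theorem mem_galoisMultipliers_of_irreducible {M P : Fq[X]} (hPm : P.Monic) (hPi : Irreducible P)
    (hPM : ¬P ∣ M) : P ∈ galoisMultipliers k L M := by
  have hM : M ≠ 0 := by rintro rfl; exact hPM (dvd_zero P)
  let K := adjoin k {x : L | carlitz Fq L M x = 0}
  let : Algebra Fq K := ((algebraMap Fq[X] K).comp C).toAlgebra
  have : IsScalarTower Fq Fq[X] K := .of_algebraMap_eq fun _ => rfl
  have : IsGalois k K := isGalois_adjoin_setOf_carlitz_mem hM
    (Γ := {0}) (Set.singleton_subset_iff.mpr ⟨0, map_zero _⟩)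
  have : FiniteDimensional k K := finiteDimensional_adjoin_setOf_carlitz_eq_zero hM
  let ι : K →ₐ[Fq[X]] L := K.val.restrictScalars Fq[X]
  obtain ⟨σ, hσ⟩ := exists_algEquiv_eq_carlitz_of_finiteDimensional (k := k) (L := K) hPm hPi
  refine ⟨σ.liftNormal L, fun x hx => ?_⟩
  let y : K := ⟨x, subset_adjoin _ _ hx⟩
  have hy : carlitz Fq K M y = 0 := Subtype.ext ((map_carlitz ι M y).trans hx)
  calc σ.liftNormal L x = ι (σ y) := σ.liftNormal_commutes L y
    _ = carlitz Fq L P x := by rw [hσ M hPM y hy, map_carlitz]; rfl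

theorem mem_galoisMultipliers_of_monic {M B : Fq[X]} (hBm : B.Monic) (hB : IsCoprime B M) :
    B ∈ galoisMultipliers k L M := by
  classical
  rw [← hBm.normalize_eq_self, ← UniqueFactorizationMonoid.prod_normalizedFactors_eq hBm.ne_zero]
  refine multiset_prod_mem _ fun P hP => ?_
  have hirr := UniqueFactorizationMonoid.irreducible_of_normalized_factor P hP
  have hmonic : P.Monic := by
    rw [← UniqueFactorizationMonoid.normalize_normalized_factor P hP]
    exact monic_normalize hirr.ne_zero
  exact mem_galoisMultipliers_of_irreducible hmonic hirr fun hPM => hirr.not_isUnit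
    (hB.isUnit_of_dvd' (UniqueFactorizationMonoid.dvd_of_mem_normalizedFactors hP) hPM)

theorem mem_galoisMultipliers_of_isCoprime {M B : Fq[X]} (hM : M ≠ 0) (hB : IsCoprime B M) :
    B ∈ galoisMultipliers k L M := by
  let D : Fq[X] := X ^ (B.natDegree + 1) * C M.leadingCoeff⁻¹
  have hmonic : (D * M).Monic := by
    rw [mul_assoc, mul_comm (C _)]
    exact (monic_X_pow _).mul (monic_mul_leadingCoeff_inv hM)
  have hdeg : B.degree < (D * M).degree := by
    rw [mul_assoc, mul_comm (C _), degree_mul, degree_X_pow, degree_mul_leadingCoeff_inv M hM]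
    have hB1 : B.degree < ((B.natDegree + 1 : ℕ) : WithBot ℕ) :=
      degree_le_natDegree.trans_lt (by exact_mod_cast B.natDegree.lt_succ_self)
    exact hB1.trans_le (le_add_of_nonneg_right (zero_le_degree_iff.mpr hM))
  rw [← add_mul_mem_galoisMultipliers_iff D]
  exact mem_galoisMultipliers_of_monic (hmonic.add_of_right hdeg) (hB.add_mul_right_left D)

end GaloisAction

section SumsOfUnits

/-- The multiplicative set of elements coprime to `m`. -/
def coprimeSubmonoid {R : Type*} [CommSemiring R] (m : R) : Submonoid R where
  carrier := {b | IsCoprime b m}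
  one_mem' := isCoprime_one_left
  mul_mem' := IsCoprime.mul_left

theorem mem_subsemiringClosure_coprimeSubmonoid {R : Type*} [CommSemiring R] {m b : R}
    (h : IsCoprime b m) : b ∈ (coprimeSubmonoid m).subsemiringClosure :=
  AddSubmonoid.subset_closure (s := (coprimeSubmonoid m : Set R)) h

theorem exists_sum_isCoprime_eq_of_subsemiringClosure_eq_top {R : Type*} [CommSemiring R] {m : R}
    (h : (coprimeSubmonoid m).subsemiringClosure = ⊤) (f : R) :
    ∃ (n : ℕ) (g : Fin n → R), (∀ i, IsCoprime (g i) m) ∧ f = ∑ i, g i := by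
  have hf : f ∈ (coprimeSubmonoid m).subsemiringClosure := h ▸ Subsemiring.mem_top f
  obtain ⟨l, hl, rfl⟩ := AddSubmonoid.exists_list_of_mem_closure hf
  exact ⟨l.length, l.get, fun i => hl _ (l.get_mem i), (Fin.sum_univ_getElem l).symm⟩

variable {F : Type*} [Field F] {M : F[X]}

theorem C_mem_subsemiringClosure_coprimeSubmonoid (a : F) :
    C a ∈ (coprimeSubmonoid M).subsemiringClosure := by
  obtain rfl | ha := eq_or_ne a 0
  · rw [C_0]
    exact zero_mem _
  · have hunit : IsUnit (C a) := isUnit_C.mpr ha.isUnit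
    exact mem_subsemiringClosure_coprimeSubmonoid
      (isCoprime_one_left.of_isCoprime_of_dvd_left hunit.dvd)

theorem sub_mem_subsemiringClosure_coprimeSubmonoid {f g : F[X]}
    (hf : f ∈ (coprimeSubmonoid M).subsemiringClosure)
    (hg : g ∈ (coprimeSubmonoid M).subsemiringClosure) :
    f - g ∈ (coprimeSubmonoid M).subsemiringClosure := by
  have hneg := mul_mem (C_mem_subsemiringClosure_coprimeSubmonoid (M := M) (-1)) hg
  rw [C_neg, C_1, neg_one_mul] at hneg
  rw [sub_eq_add_neg]
  exact add_mem hf hneg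

theorem subsemiringClosure_coprimeSubmonoid_eq_top_of_X_mem
    (hX : X ∈ (coprimeSubmonoid M).subsemiringClosure) :
    (coprimeSubmonoid M).subsemiringClosure = ⊤ := by
  refine (Subsemiring.eq_top_iff' _).mpr fun f => ?_
  induction f using Polynomial.recOnHorner with
  | M0 => exact zero_mem _
  | MC f a _ _ ih => exact add_mem ih (C_mem_subsemiringClosure_coprimeSubmonoid a)
  | MX f _ ih => exact mul_mem ih hX

theorem isCoprime_add_C_mul_X {N : F[X]} (hN : IsCoprime X N) {a : F} (ha : a ≠ 0) (n : ℕ) :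
    IsCoprime (N + C a * X) (X ^ n * N) := by
  have hunit : IsUnit (C a) := isUnit_C.mpr ha.isUnit
  refine .mul_right (.pow_right ?_) ?_
  · exact hN.symm.add_mul_right_left _
  · have hX : IsCoprime (C a * X) N := (isCoprime_mul_unit_left_left hunit X N).mpr hN
    simpa only [mul_one] using hX.mul_add_left_left 1

theorem X_mem_subsemiringClosure_coprimeSubmonoid_of_not_dvd {a : F} (h : ¬X - C a ∣ M) :
    X ∈ (coprimeSubmonoid M).subsemiringClosure := by
  rw [← sub_add_cancel X (C a)]
  have hcop : IsCoprime (X - C a) M := (irreducible_X_sub_C a).coprime_iff_not_dvd.mpr h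
  exact add_mem (mem_subsemiringClosure_coprimeSubmonoid hcop)
    (C_mem_subsemiringClosure_coprimeSubmonoid a)

theorem X_mem_subsemiringClosure_coprimeSubmonoid_of_ne (hM : M ≠ 0) {a : F} (ha₀ : a ≠ 0)
    (ha₁ : a ≠ 1) : X ∈ (coprimeSubmonoid M).subsemiringClosure := by
  obtain ⟨N, hMN, hN⟩ := exists_eq_pow_rootMultiplicity_mul_and_not_dvd M hM 0
  rw [C_0, sub_zero] at hMN hN
  have hcop : IsCoprime X N := irreducible_X.coprime_iff_not_dvd.mpr hN
  have hmem {b : F} (hb : b ≠ 0) : N + C b * X ∈ (coprimeSubmonoid M).subsemiringClosure := by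
    rw [hMN]
    exact mem_subsemiringClosure_coprimeSubmonoid (isCoprime_add_C_mul_X hcop hb _)
  have hX : X = C (a - 1)⁻¹ * ((N + C a * X) - (N + C 1 * X)) := by
    rw [add_sub_add_left_eq_sub, ← sub_mul, ← C_sub, ← mul_assoc, ← C_mul,
      inv_mul_cancel₀ (sub_ne_zero.mpr ha₁), C_1, one_mul]
  rw [hX]
  exact mul_mem (C_mem_subsemiringClosure_coprimeSubmonoid _)
    (sub_mem_subsemiringClosure_coprimeSubmonoid (hmem ha₀) (hmem one_ne_zero))

theorem exists_sum_isCoprime_eq [Fintype F] (hM : M ≠ 0)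
    (hq : ¬(Fintype.card F = 2 ∧ X * (X + 1) ∣ M)) (f : F[X]) :
    ∃ (n : ℕ) (g : Fin n → F[X]), (∀ i, IsCoprime (g i) M) ∧ f = ∑ i, g i := by
  refine exists_sum_isCoprime_eq_of_subsemiringClosure_eq_top
    (subsemiringClosure_coprimeSubmonoid_eq_top_of_X_mem ?_) f
  by_cases h2 : Fintype.card F = 2
  · have hcop : IsCoprime (X : F[X]) (X + 1) := ⟨-1, 1, by ring⟩
    obtain hX | hX : ¬X ∣ M ∨ ¬(X + 1) ∣ M :=
      not_and_or.mp fun h => hq ⟨h2, hcop.mul_dvd h.1 h.2⟩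
    · exact X_mem_subsemiringClosure_coprimeSubmonoid_of_not_dvd (a := 0) (by simpa using hX)
    · exact X_mem_subsemiringClosure_coprimeSubmonoid_of_not_dvd (a := -1) (by simpa using hX)
  · classical
    have hcard : ({0, 1} : Finset F).card < (Finset.univ : Finset F).card :=
      Finset.card_le_two.trans_lt (lt_of_le_of_ne Fintype.one_lt_card (Ne.symm h2))
    obtain ⟨a, -, ha⟩ := Finset.exists_mem_notMem_of_card_lt_card hcard
    rw [Finset.mem_insert, Finset.mem_singleton, not_or] at ha
    exact X_mem_subsemiringClosure_coprimeSubmonoid_of_ne hM ha.1 ha.2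

end SumsOfUnits

section KummerPairing

variable {R A V : Type*} (G : Type*) [CommSemiring R] [Semiring A] [Algebra R A]
  [AddCommGroup V] [Module R V] [Group G] [DistribMulAction G V]

/-- The subgroup of `G` that fixes the `M`-torsion of `V` pointwise, where `V` is an `A`-module
through `φ`. For `G` the Galois group of a field `V ⊇ k(Λ_M)` this is `Gal(V / k(Λ_M))`. -/
def torsionFixer (φ : A →ₐ[R] Module.End R V) (M : A) : Subgroup G :=
  fixingSubgroup G {v | φ M v = 0}

variable {G} in
/-- The Kummer pairing `⟨σ, a⟩ = σ α - α`, where `α` is any `M`-th root of `a`, that is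
`φ M α = a`. The value is independent of the chosen root for `σ ∈ torsionFixer G φ M`, see
`kummerPairing_eq`, and it is a junk value if there is no root. -/
noncomputable def kummerPairing (φ : A →ₐ[R] Module.End R V) (M : A) (σ : G) (a : V) : V :=
  σ • Classical.epsilon (fun α => φ M α = a) - Classical.epsilon (fun α => φ M α = a)

variable {G} {φ : A →ₐ[R] Module.End R V} {M : A} {σ τ s : G} {a b α : V}

theorem mem_torsionFixer_iff : σ ∈ torsionFixer G φ M ↔ ∀ v, φ M v = 0 → σ • v = v :=
  mem_fixingSubgroup_iff G

theorem kummerPairing_eq (hσ : σ ∈ torsionFixer G φ M) (hα : φ M α = a) :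
    kummerPairing φ M σ a = σ • α - α := by
  set β := Classical.epsilon (fun α => φ M α = a)
  have hβa : φ M β = a := Classical.epsilon_spec (p := fun α => φ M α = a) ⟨α, hα⟩
  have hfix : σ • (β - α) = β - α :=
    mem_torsionFixer_iff.mp hσ _ (by rw [map_sub, hβa, hα, sub_self])
  rw [smul_sub, sub_eq_sub_iff_sub_eq_sub] at hfix
  exact hfix

theorem kummerPairing_add (hσ : σ ∈ torsionFixer G φ M) (ha : ∃ α, φ M α = a)
    (hb : ∃ β, φ M β = b) :
    kummerPairing φ M σ (a + b) = kummerPairing φ M σ a + kummerPairing φ M σ b := by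
  obtain ⟨α, rfl⟩ := ha
  obtain ⟨β, rfl⟩ := hb
  rw [kummerPairing_eq hσ rfl, kummerPairing_eq hσ rfl, kummerPairing_eq hσ (map_add _ α β),
    smul_add, add_sub_add_comm]

theorem kummerPairing_apply (hφ : ∀ (f : A) (g : G) v, g • φ f v = φ f (g • v))
    (hσ : σ ∈ torsionFixer G φ M) (ha : ∃ α, φ M α = a) {f : A} (hf : Commute f M) :
    kummerPairing φ M σ (φ f a) = φ f (kummerPairing φ M σ a) := by
  obtain ⟨α, rfl⟩ := ha
  have hfα : φ M (φ f α) = φ f (φ M α) := by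
    rw [← Module.End.mul_apply, ← map_mul, ← hf.eq, map_mul, Module.End.mul_apply]
  rw [kummerPairing_eq hσ rfl, kummerPairing_eq hσ hfα, hφ, map_sub]

theorem apply_kummerPairing (hφ : ∀ (f : A) (g : G) v, g • φ f v = φ f (g • v))
    (hσ : σ ∈ torsionFixer G φ M) (ha : a ∈ MulAction.fixedPoints G V)
    (hr : ∃ α, φ M α = a) : φ M (kummerPairing φ M σ a) = 0 := by
  obtain ⟨α, rfl⟩ := hr
  rw [kummerPairing_eq hσ rfl, map_sub, ← hφ, ha, sub_self]

theorem kummerPairing_mul (hφ : ∀ (f : A) (g : G) v, g • φ f v = φ f (g • v))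
    (hσ : σ ∈ torsionFixer G φ M) (hτ : τ ∈ torsionFixer G φ M)
    (ha : a ∈ MulAction.fixedPoints G V) (hr : ∃ α, φ M α = a) :
    kummerPairing φ M (σ * τ) a = kummerPairing φ M σ a + kummerPairing φ M τ a := by
  obtain ⟨α, rfl⟩ := hr
  have hτα : φ M (τ • α) = φ M α := by rw [← hφ, ha]
  rw [kummerPairing_eq (mul_mem hσ hτ) rfl, kummerPairing_eq hσ hτα, kummerPairing_eq hτ rfl,
    mul_smul, sub_add_sub_cancel]

theorem conj_mem_torsionFixer (hφ : ∀ (f : A) (g : G) v, g • φ f v = φ f (g • v))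
    (s : G) (hσ : σ ∈ torsionFixer G φ M) : s * σ * s⁻¹ ∈ torsionFixer G φ M := by
  refine mem_torsionFixer_iff.mpr fun v hv => ?_
  have hfix : σ • s⁻¹ • v = s⁻¹ • v :=
    mem_torsionFixer_iff.mp hσ _ (by rw [← hφ, hv, smul_zero])
  rw [mul_smul, mul_smul, hfix, smul_inv_smul]

theorem kummerPairing_conj (hφ : ∀ (f : A) (g : G) v, g • φ f v = φ f (g • v))
    (hσ : σ ∈ torsionFixer G φ M) (ha : a ∈ MulAction.fixedPoints G V)
    (hr : ∃ α, φ M α = a) {B : A} (hs : ∀ v, φ M v = 0 → s • v = φ B v) :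
    kummerPairing φ M (s * σ * s⁻¹) a = φ B (kummerPairing φ M σ a) := by
  have htorsion := apply_kummerPairing hφ hσ ha hr
  obtain ⟨α, rfl⟩ := hr
  have hsα : φ M (s⁻¹ • α) = φ M α := by rw [← hφ, ha]
  rw [← hs _ htorsion, kummerPairing_eq (conj_mem_torsionFixer hφ s hσ) rfl,
    kummerPairing_eq hσ hsα, smul_sub, smul_inv_smul, mul_smul, mul_smul]

theorem kummerPairing_list_prod (hφ : ∀ (f : A) (g : G) v, g • φ f v = φ f (g • v))
    {l : List G} (hl : ∀ τ ∈ l, τ ∈ torsionFixer G φ M)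
    (ha : a ∈ MulAction.fixedPoints G V) (hr : ∃ α, φ M α = a) :
    kummerPairing φ M l.prod a = (l.map fun τ => kummerPairing φ M τ a).sum := by
  induction l with
  | nil =>
    obtain ⟨α, hα⟩ := hr
    rw [List.prod_nil, kummerPairing_eq (one_mem _) hα, one_smul, sub_self, List.map_nil,
      List.sum_nil]
  | cons τ l ih =>
    rw [List.forall_mem_cons] at hl
    rw [List.prod_cons, kummerPairing_mul hφ hl.1 (list_prod_mem hl.2) ha hr, ih hl.2,
      List.map_cons, List.sum_cons]

theorem kummerPairing_prod_conj (hφ : ∀ (f : A) (g : G) v, g • φ f v = φ f (g • v))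
    {n : ℕ} {s : Fin n → G} {g : Fin n → A}
    (hs : ∀ i v, φ M v = 0 → s i • v = φ (g i) v) (hσ : σ ∈ torsionFixer G φ M)
    (ha : a ∈ MulAction.fixedPoints G V) (hr : ∃ α, φ M α = a) :
    kummerPairing φ M (List.ofFn fun i => s i * σ * (s i)⁻¹).prod a =
      φ (∑ i, g i) (kummerPairing φ M σ a) := by
  rw [kummerPairing_list_prod hφ _ ha hr, List.map_ofFn, List.sum_ofFn, map_sum,
    LinearMap.sum_apply]
  · exact Finset.sum_congr rfl fun i _ => kummerPairing_conj hφ hσ ha hr (hs i)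
  · intro τ hτ
    obtain ⟨i, rfl⟩ := (List.mem_ofFn' _ _).mp hτ
    exact conj_mem_torsionFixer hφ (s i) hσ

end KummerPairing

section GaloisKernels

theorem fixingSubgroup_adjoin {k E : Type*} [Field k] [Field E] [Algebra k E] (T : Set E) :
    (adjoin k T).fixingSubgroup = _root_.fixingSubgroup (E ≃ₐ[k] E) T := by
  refine le_antisymm (fixingSubgroup_antitone _ _ (subset_adjoin k T)) ?_
  rw [← le_iff_le, adjoin_le_iff]
  exact fun x hx => (mem_fixedField_iff _ _).mpr fun σ hσ =>
    (_root_.mem_fixingSubgroup_iff _).mp hσ x hx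

variable {R A k E : Type*} [CommSemiring R] [Semiring A] [Algebra R A] [Field k] [Field E]
  [Algebra k E] [Module R E] {φ : A →ₐ[R] Module.End R E} {M : A}

theorem eq_one_of_forall_kummerPairing_eq_zero {Γ : Set E} (hE : adjoin k {x | φ M x ∈ Γ} = ⊤)
    {σ : E ≃ₐ[k] E} (hσ : σ ∈ torsionFixer (E ≃ₐ[k] E) φ M)
    (h : ∀ a ∈ Γ, kummerPairing φ M σ a = 0) : σ = 1 := by
  rw [← Subgroup.mem_bot, ← fixingSubgroup_top, ← hE, fixingSubgroup_adjoin,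
    _root_.mem_fixingSubgroup_iff]
  intro x hx
  rw [← sub_eq_zero, ← kummerPairing_eq hσ rfl, h _ hx]

theorem forall_kummerPairing_eq_zero_iff [IsGalois k E] {a : E} (hr : ∃ α, φ M α = a) :
    (∀ σ ∈ torsionFixer (E ≃ₐ[k] E) φ M, kummerPairing φ M σ a = 0) ↔
      ∃ β ∈ adjoin k {x | φ M x = 0}, φ M β = a := by
  have hmem (α : E) : α ∈ adjoin k {x | φ M x = 0} ↔
      ∀ σ ∈ torsionFixer (E ≃ₐ[k] E) φ M, σ • α = α := by
    rw [torsionFixer, ← fixingSubgroup_adjoin]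
    conv_lhs => rw [← InfiniteGalois.fixedField_fixingSubgroup (adjoin k {x | φ M x = 0})]
    exact mem_fixedField_iff _ _
  constructor
  · obtain ⟨α, hα⟩ := hr
    refine fun h => ⟨α, (hmem α).mpr fun σ hσ => ?_, hα⟩
    rw [← sub_eq_zero, ← kummerPairing_eq hσ hα, h σ hσ]
  · rintro ⟨β, hβ, hβa⟩ σ hσ
    rw [kummerPairing_eq hσ hβa, (hmem β).mp hβ σ hσ, sub_self]

end GaloisKernels

theorem coe_mem_adjoin_iff {k L : Type*} [Field k] [Field L] [Algebra k L]
    {E : IntermediateField k L} {T : Set L} (hT : T ⊆ E) (x : E) :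
    (x : L) ∈ adjoin k T ↔ x ∈ adjoin k ((↑) ⁻¹' T : Set E) := by
  rw [← mem_lift, lift_adjoin, Set.image_preimage_eq_of_subset (by simpa using hT)]

theorem adjoin_preimage_coe_eq_top {k L : Type*} [Field k] [Field L] [Algebra k L]
    {T : Set L} : adjoin k ((↑) ⁻¹' T : Set (adjoin k T)) = ⊤ :=
  eq_top_iff.mpr fun x _ => (coe_mem_adjoin_iff (subset_adjoin k T) x).mp x.2

section Bridge

variable {Fq : Type} [Field Fq] [Fintype Fq]

instance isScalarTower_intermediateField
    (E : IntermediateField (RatFunc Fq) (AlgebraicClosure (RatFunc Fq))) :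
    IsScalarTower Fq Fq[X] E :=
  .of_algebraMap_eq fun a =>
    Subtype.ext (IsScalarTower.algebraMap_apply Fq Fq[X] (AlgebraicClosure (RatFunc Fq)) a)

variable {ψ : Fq[X] →+* AddMonoid.End (AlgebraicClosure (RatFunc Fq))} {M : Fq[X]}
  {E : IntermediateField (RatFunc Fq) (AlgebraicClosure (RatFunc Fq))}

theorem coe_carlitz (f : Fq[X]) (x : E) :
    (carlitz Fq E f x : AlgebraicClosure (RatFunc Fq)) =
      carlitz Fq (AlgebraicClosure (RatFunc Fq)) f x :=
  map_carlitz (E.val.restrictScalars Fq[X]) f x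

theorem IsCarlitz.apply_eq_carlitz (hψ : IsCarlitz ψ) (f : Fq[X])
    (x : AlgebraicClosure (RatFunc Fq)) : ψ f x = carlitz Fq _ f x := by
  induction f using Polynomial.recOnHorner with
  | M0 => simp
  | MC f a _ _ ih =>
    have hadd : ψ (f + C a) x = ψ f x + ψ (C a) x := by rw [map_add]; rfl
    rw [hadd, ih, hψ.2, carlitz_add_apply, carlitz_C_apply, Algebra.smul_def]
    rfl
  | MX f _ ih =>
    have hmul : ψ (f * X) x = ψ X (ψ f x) := by rw [mul_comm, map_mul]; rfl
    rw [hmul, ih, hψ.1, carlitz_mul_X_apply, IsScalarTower.algebraMap_apply Fq[X] (RatFunc Fq),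
      RatFunc.algebraMap_X]

theorem IsCarlitz.apply_coe_eq_coe_carlitz (hψ : IsCarlitz ψ) (f : Fq[X]) (x : E) :
    ψ f x = (carlitz Fq E f x : AlgebraicClosure (RatFunc Fq)) :=
  (hψ.apply_eq_carlitz f x).trans (coe_carlitz f x).symm

theorem IsCarlitz.fixesTorsion_iff (hψ : IsCarlitz ψ) {σ : E ≃ₐ[RatFunc Fq] E} :
    FixesTorsion ψ M σ ↔ σ ∈ torsionFixer (E ≃ₐ[RatFunc Fq] E) (carlitz Fq E) M := by
  rw [mem_torsionFixer_iff]
  refine forall_congr' fun x => ?_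
  rw [hψ.apply_coe_eq_coe_carlitz, ZeroMemClass.coe_eq_zero, AlgEquiv.smul_def]

theorem IsCarlitz.extendsSigma_iff (hψ : IsCarlitz ψ) {s : E ≃ₐ[RatFunc Fq] E} {B : Fq[X]} :
    ExtendsSigma ψ M s B ↔ ∀ x : E, carlitz Fq E M x = 0 → s x = carlitz Fq E B x := by
  refine forall_congr' fun x => ?_
  rw [hψ.apply_coe_eq_coe_carlitz, hψ.apply_coe_eq_coe_carlitz, ZeroMemClass.coe_eq_zero,
    Subtype.coe_inj]

theorem kummerPairing_action [Normal (RatFunc Fq) E] (hψ : IsCarlitz ψ) (hM : M ≠ 0)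
    (hq : ¬(Fintype.card Fq = 2 ∧ X * (X + 1) ∣ M))
    {c : Fq[X] → (E ≃ₐ[RatFunc Fq] E) → (E ≃ₐ[RatFunc Fq] E)} (hc : IsDecompConjAction ψ M c)
    (f : Fq[X]) {σ : E ≃ₐ[RatFunc Fq] E}
    (hσ : σ ∈ torsionFixer (E ≃ₐ[RatFunc Fq] E) (carlitz Fq E) M) {a : E}
    (ha : a ∈ MulAction.fixedPoints (E ≃ₐ[RatFunc Fq] E) E) (hr : ∃ α, carlitz Fq E M α = a) :
    kummerPairing (carlitz Fq E) M (c f σ) a =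
      carlitz Fq E f (kummerPairing (carlitz Fq E) M σ a) := by
  obtain ⟨n, g, hg, rfl⟩ := exists_sum_isCoprime_eq hM hq f
  choose s hs using fun i =>
    mem_galoisMultipliers_of_isCoprime (k := RatFunc Fq) (L := E) hM (hg i)
  rw [hc _ σ (hψ.fixesTorsion_iff.mpr hσ) n g hg (by rw [sub_self]; exact dvd_zero M) s
    fun i => hψ.extendsSigma_iff.mpr (hs i)]
  exact kummerPairing_prod_conj (fun f σ x => algEquiv_carlitz σ f x) hs hσ ha hr

/-- The Carlitz Kummer pairing of `Gal(E / k)` with `E`, with values in `k̄` and with its second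
argument extended to `k̄` by the junk value `0` outside `E`. -/
noncomputable def carlitzPairing (M : Fq[X]) (σ : E ≃ₐ[RatFunc Fq] E) :
    AlgebraicClosure (RatFunc Fq) → AlgebraicClosure (RatFunc Fq) :=
  Function.extend (Subtype.val : E → _) (fun a => ↑(kummerPairing (carlitz Fq E) M σ a)) 0

theorem carlitzPairing_coe (σ : E ≃ₐ[RatFunc Fq] E) (a : E) :
    carlitzPairing M σ a = kummerPairing (carlitz Fq E) M σ a :=
  Subtype.val_injective.extend_apply _ _ a

theorem exists_coe_eq_of_mem {Γ : Set (AlgebraicClosure (RatFunc Fq))} (hM : M ≠ 0)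
    (hΓ : Γ ⊆ Set.range (algebraMap (RatFunc Fq) (AlgebraicClosure (RatFunc Fq))))
    (hE : ∀ x, carlitz Fq _ M x ∈ Γ → x ∈ E) {a : AlgebraicClosure (RatFunc Fq)} (ha : a ∈ Γ) :
    ∃ b : E, ↑b = a ∧ b ∈ MulAction.fixedPoints (E ≃ₐ[RatFunc Fq] E) E ∧
      ∃ α, carlitz Fq E M α = b := by
  have : FaithfulSMul Fq[X] (AlgebraicClosure (RatFunc Fq)) := .trans Fq[X] (RatFunc Fq) _
  obtain ⟨b, rfl⟩ := hΓ ha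
  obtain ⟨α, hα⟩ := carlitz_surjective_of_isAlgClosed hM
    (algebraMap (RatFunc Fq) (AlgebraicClosure (RatFunc Fq)) b)
  exact ⟨algebraMap (RatFunc Fq) E b, rfl, fun σ => σ.commutes b,
    ⟨α, hE α (by rwa [hα])⟩, Subtype.ext ((coe_carlitz _ _).trans hα)⟩

theorem adjoin_setOf_coe_carlitz_mem_eq_top {Γ : Set (AlgebraicClosure (RatFunc Fq))}
    (hE : E = adjoin (RatFunc Fq) {x | carlitz Fq _ M x ∈ Γ}) :
    adjoin (RatFunc Fq) {x : E | carlitz Fq E M x ∈ ((↑) ⁻¹' Γ : Set E)} = ⊤ := by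
  subst hE
  simp only [Set.mem_preimage, coe_carlitz]
  exact adjoin_preimage_coe_eq_top

theorem exists_mem_adjoin_torsion_iff
    (hE : ∀ x : AlgebraicClosure (RatFunc Fq), carlitz Fq _ M x = 0 → x ∈ E) {a : E}
    (ha : ∀ x : AlgebraicClosure (RatFunc Fq), carlitz Fq _ M x = a → x ∈ E) :
    (∃ β ∈ adjoin (RatFunc Fq) {x : E | carlitz Fq E M x = 0}, carlitz Fq E M β = a) ↔
      ∃ β ∈ adjoin (RatFunc Fq) {x | carlitz Fq _ M x = 0},
        carlitz Fq (AlgebraicClosure (RatFunc Fq)) M β = a := by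
  have hpre : {x : E | carlitz Fq E M x = 0} =
      (↑) ⁻¹' {x : AlgebraicClosure (RatFunc Fq) | carlitz Fq _ M x = 0} :=
    Set.ext fun x => by
      rw [Set.mem_preimage, Set.mem_ofPred_eq, Set.mem_ofPred_eq, ← coe_carlitz,
        ZeroMemClass.coe_eq_zero]
  rw [hpre]
  constructor
  · rintro ⟨β, hβ, rfl⟩
    exact ⟨β, (coe_mem_adjoin_iff hE β).mpr hβ, (coe_carlitz M β).symm⟩
  · rintro ⟨β, hβ, hβa⟩
    exact ⟨⟨β, ha β hβa⟩, (coe_mem_adjoin_iff hE ⟨β, ha β hβa⟩).mp hβ,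
      Subtype.ext ((coe_carlitz _ _).trans hβa)⟩

end Bridge

theorem carlitz_kummer_pairing_general
    {Fq : Type} [Field Fq] [Fintype Fq]
    (ψ : Fq[X] →+* AddMonoid.End (AlgebraicClosure (RatFunc Fq)))
    (hψ : IsCarlitz ψ)
    (M : Fq[X]) (hM : M ≠ 0)
    (hq : ¬ (Fintype.card Fq = 2 ∧ X * (X + 1) ∣ M))
    (Γ : AddSubgroup (AlgebraicClosure (RatFunc Fq)))
    (hΓk : ∀ x ∈ Γ, x ∈ Set.range (algebraMap (RatFunc Fq) (AlgebraicClosure (RatFunc Fq))))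
    (K : IntermediateField (RatFunc Fq) (AlgebraicClosure (RatFunc Fq)))
    (hK : K = adjoin (RatFunc Fq) {x | ψ M x = 0})
    (E : IntermediateField (RatFunc Fq) (AlgebraicClosure (RatFunc Fq)))
    (hE : E = adjoin (RatFunc Fq) {x | ψ M x ∈ Γ})
    (c : Fq[X] → (E ≃ₐ[RatFunc Fq] E) → (E ≃ₐ[RatFunc Fq] E))
    (hc : IsDecompConjAction ψ M c) :
    ∃ p : (E ≃ₐ[RatFunc Fq] E) → AlgebraicClosure (RatFunc Fq) →
        AlgebraicClosure (RatFunc Fq),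
      (∀ σ, FixesTorsion ψ M σ → ∀ a ∈ Γ, ∀ α : E,
        ψ M (α : AlgebraicClosure (RatFunc Fq)) = a →
        p σ a = (σ α : AlgebraicClosure (RatFunc Fq)) - (α : AlgebraicClosure (RatFunc Fq))) ∧
      (∀ σ, FixesTorsion ψ M σ → ∀ a ∈ Γ, ψ M (p σ a) = 0) ∧
      (∀ σ τ, FixesTorsion ψ M σ → FixesTorsion ψ M τ → ∀ a ∈ Γ,
        p (σ * τ) a = p σ a + p τ a) ∧
      (∀ f σ, FixesTorsion ψ M σ → ∀ a ∈ Γ, p (c f σ) a = ψ f (p σ a)) ∧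
      (∀ σ, FixesTorsion ψ M σ → ∀ a ∈ Γ, ∀ b ∈ Γ, p σ (a + b) = p σ a + p σ b) ∧
      (∀ f σ, FixesTorsion ψ M σ → ∀ a ∈ Γ, p σ (ψ f a) = ψ f (p σ a)) ∧
      (∀ σ, FixesTorsion ψ M σ → (∀ a ∈ Γ, p σ a = 0) → σ = 1) ∧
      (∀ a ∈ Γ, (∀ σ, FixesTorsion ψ M σ → p σ a = 0) ↔
        ∃ β : AlgebraicClosure (RatFunc Fq), β ∈ K ∧ ψ M β = a) := by
  simp only [hψ.apply_eq_carlitz, hψ.fixesTorsion_iff] at hK hE ⊢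
  subst hK
  have hmem (x) (hx : carlitz Fq _ M x ∈ Γ) : x ∈ E := hE ▸ subset_adjoin _ _ hx
  have hgal : IsGalois (RatFunc Fq) E := hE ▸ isGalois_adjoin_setOf_carlitz_mem hM hΓk
  have hroot {a} (ha : a ∈ Γ) := exists_coe_eq_of_mem hM hΓk hmem ha
  have hcomm (f : Fq[X]) (σ : E ≃ₐ[RatFunc Fq] E) (x : E) := algEquiv_carlitz σ f x
  refine ⟨carlitzPairing M, fun σ hσ a ha α hα => ?_, fun σ hσ a ha => ?_,
    fun σ τ hσ hτ a ha => ?_, fun f σ hσ a ha => ?_, fun σ hσ a ha b hb => ?_,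
    fun f σ hσ a ha => ?_, fun σ hσ h => ?_, fun a ha => ?_⟩
  · obtain ⟨a, rfl, -⟩ := hroot ha
    rw [carlitzPairing_coe, kummerPairing_eq hσ (Subtype.ext ((coe_carlitz _ _).trans hα))]
    rfl
  · obtain ⟨a, rfl, hfix, hr⟩ := hroot ha
    rw [carlitzPairing_coe, ← coe_carlitz, apply_kummerPairing hcomm hσ hfix hr]
    rfl
  · obtain ⟨a, rfl, hfix, hr⟩ := hroot ha
    simp only [carlitzPairing_coe, kummerPairing_mul hcomm hσ hτ hfix hr]
    rfl
  · obtain ⟨a, rfl, hfix, hr⟩ := hroot ha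
    rw [carlitzPairing_coe, carlitzPairing_coe, ← coe_carlitz,
      kummerPairing_action hψ hM hq hc f hσ hfix hr]
  · obtain ⟨a, rfl, -, hr⟩ := hroot ha
    obtain ⟨b, rfl, -, hr'⟩ := hroot hb
    simp only [carlitzPairing_coe, ← E.coe_add, kummerPairing_add hσ hr hr']
  · obtain ⟨a, rfl, -, hr⟩ := hroot ha
    simp only [← coe_carlitz, carlitzPairing_coe, kummerPairing_apply hcomm hσ hr (.all f M)]
  · refine eq_one_of_forall_kummerPairing_eq_zero (adjoin_setOf_coe_carlitz_mem_eq_top hE) hσ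
      fun a ha => Subtype.ext ?_
    rw [← carlitzPairing_coe, h _ ha]
    rfl
  · obtain ⟨a, rfl, -, hr⟩ := hroot ha
    rw [← exists_mem_adjoin_torsion_iff (fun x hx => hmem x (hx ▸ Γ.zero_mem))
      fun x hx => hmem x (hx ▸ ha), ← forall_kummerPairing_eq_zero_iff hr]
    simp only [carlitzPairing_coe, ZeroMemClass.coe_eq_zero]

/-- **Proposition 2.8.**
Suppose `q ≠ 2`, or `q = 2` and `T(T+1) ∤ M`.  Let `Γ` be a finitely generated
`A`-submodule of `(k,+)` (under the Carlitz action), `K = k(Λ_M)`,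
`k_{M,Γ} = k(Λ_M, (1/M)Γ)` and `H_{M,Γ} = Gal(k_{M,Γ}/K)` with its natural `A`-module
structure `c`.  The map `H_{M,Γ} × Γ → Λ_M`, `(σ, a) ↦ ⟨σ, a⟩ = σα - α` (where
`α^M = a`) is well defined and `A`-bilinear; its kernel on the left is `{1}` and its
kernel on the right is `Γ ∩ K^M`. -/
theorem carlitz_kummer_pairing
    {Fq : Type} [Field Fq] [Fintype Fq]
    (ψ : Polynomial Fq →+* AddMonoid.End (AlgebraicClosure (RatFunc Fq)))
    (hψ : IsCarlitz ψ)
    (M : Polynomial Fq) (hM : 0 < M.natDegree)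
    (hq : ¬ (Fintype.card Fq = 2 ∧ X * (X + 1) ∣ M))
    -- Γ : a finitely generated A-submodule of (k, +)
    (Γ : AddSubgroup (AlgebraicClosure (RatFunc Fq)))
    (hΓk : ∀ x ∈ Γ, x ∈ Set.range (algebraMap (RatFunc Fq) (AlgebraicClosure (RatFunc Fq))))
    (hΓA : ∀ (f : Polynomial Fq), ∀ x ∈ Γ, ψ f x ∈ Γ)
    (hΓfg : ∃ (n : ℕ) (a : Fin n → AlgebraicClosure (RatFunc Fq)), (∀ i, a i ∈ Γ) ∧
      ∀ x ∈ Γ, ∃ g : Fin n → Polynomial Fq, x = ∑ i, ψ (g i) (a i))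
    -- K = k(Λ_M) and k_{M,Γ} = k(Λ_M, (1/M)Γ)
    (K : IntermediateField (RatFunc Fq) (AlgebraicClosure (RatFunc Fq)))
    (hK : K = adjoin (RatFunc Fq) {x | ψ M x = 0})
    (E : IntermediateField (RatFunc Fq) (AlgebraicClosure (RatFunc Fq)))
    (hE : E = adjoin (RatFunc Fq) {x | ψ M x ∈ Γ})
    -- the natural A-module structure on H_{M,Γ} = Gal(k_{M,Γ}/K)
    (c : Polynomial Fq → (↥E ≃ₐ[RatFunc Fq] ↥E) → (↥E ≃ₐ[RatFunc Fq] ↥E))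
    (hc : IsDecompConjAction ψ M c)
    (hcH : ∀ f τ, FixesTorsion ψ M τ → FixesTorsion ψ M (c f τ)) :
    ∃ p : (↥E ≃ₐ[RatFunc Fq] ↥E) → AlgebraicClosure (RatFunc Fq) →
        AlgebraicClosure (RatFunc Fq),
      -- p computes the pairing ⟨σ, a⟩ = σα - α (independently of the chosen root α)
      (∀ σ, FixesTorsion ψ M σ → ∀ a ∈ Γ, ∀ α : ↥E,
        ψ M (α : AlgebraicClosure (RatFunc Fq)) = a →
        p σ a = (σ α : AlgebraicClosure (RatFunc Fq)) - (α : AlgebraicClosure (RatFunc Fq))) ∧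
      -- with values in Λ_M
      (∀ σ, FixesTorsion ψ M σ → ∀ a ∈ Γ, ψ M (p σ a) = 0) ∧
      -- A-bilinearity
      (∀ σ τ, FixesTorsion ψ M σ → FixesTorsion ψ M τ → ∀ a ∈ Γ,
        p (σ * τ) a = p σ a + p τ a) ∧
      (∀ f σ, FixesTorsion ψ M σ → ∀ a ∈ Γ, p (c f σ) a = ψ f (p σ a)) ∧
      (∀ σ, FixesTorsion ψ M σ → ∀ a ∈ Γ, ∀ b ∈ Γ, p σ (a + b) = p σ a + p σ b) ∧
      (∀ f σ, FixesTorsion ψ M σ → ∀ a ∈ Γ, p σ (ψ f a) = ψ f (p σ a)) ∧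
      -- the kernel on the left is {1}
      (∀ σ, FixesTorsion ψ M σ → (∀ a ∈ Γ, p σ a = 0) → σ = 1) ∧
      -- the kernel on the right is Γ ∩ K^M
      (∀ a ∈ Γ, (∀ σ, FixesTorsion ψ M σ → p σ a = 0) ↔
        ∃ β : AlgebraicClosure (RatFunc Fq), β ∈ K ∧ ψ M β = a) := by
  exact carlitz_kummer_pairing_general ψ hψ M (ne_zero_of_natDegree_gt hM) hq Γ hΓk K hK E hE c hc
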